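/- Let S ⊆ {1,…,p} be nonempty with |S| = d, and for each j ∈ S let the bin construction with the same K be given for (X_j, μ_j), where each μ_j has density bounded below by p_L > 0 and above by p_U < ∞ on the bounded interval X_j. Then there exist a constant C_S > 0 and an integer K_0, depending only on d, L, p_L, p_U, and the lengths of the intervals X_j, such that for all K ≥ K_0 the following holds: for every L-Lipschitz g_{0,S} : ∏_{j∈S}X_j → ℝ (with respect to the Euclidean norm), setting ℓ_{k_1,…,k_d}(x_S) = ∏_{j∈S} ℓ_{j,k_j}(x_j), δ_{k_1,…,k_d} = (∫ ℓ_{k_1,…,k_d}·g_{0,S} dP_S)/(∫ ℓ_{k_1,…,k_d} dP_S) with P_S = ⊗_{j∈S}μ_j, and f_{E,S}(x_S) = ∑_{k_1,…,k_d=1}^{K} δ_{k_1,…,k_d} ℓ_{k_1,…,k_d}(x_S), one has sup_{x_S} |g_{0,S}(x_S) − f_{E,S}(x_S)| ≤ C_S·d/K. -/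

import Mathlib

/-! The functions `ℓ_{j,k}` form a partition of unity, so the error at `x` is at most the
`ℓ_κ(x)`-weighted sum over `κ` of the `ℓ_κ`-averages of `|g x - g y|`. Since the Euclidean norm is
at most the `ℓ¹` norm, `|g x - g y| ≤ L ∑_{j ∈ S} |x_j - y_j|`, and for the `j`-th term of this sum
all the product structure factors out (`integral_prod_mul_coord`, `sum_prod_mul_coord`). What
remains is a statement in one variable (`sum_ell_mul_average_le`): for every `x` in the interval,
`∑_k ℓ_k(x) (∫ ℓ_k(y) |x - y| dμ / ∫ ℓ_k dμ) ≤ (26 + 1 / pL) / K`.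

For the latter, let `D_k(y)` be the distance from `y` to the `k`-th bin. The density bound from
below shows that bins, intersected with the interval, have length at most `1 / (pL K)`
(`abs_sub_le_binDist`), hence `|x - y| ≤ D_k(x) + 1 / (pL K) + D_k(y)`. The elementary inequality
`t σ(-t) ≤ 1` gives `ℓ_k D_k ≤ 2γ` (`ell_mul_binDist_le`), and the density bound from above gives
`∫ ℓ_k dμ ≥ 1 / (12 K)` once `K` is large (`integral_ell_ge`). With `γ = K⁻³` the three terms
contribute at most `2 / K²`, `1 / (pL K)` and `24 / K²`. -/

open MeasureTheory

/-- The sigmoid function σ(t) = 1/(1+exp(−t)). -/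
noncomputable def sigmoid (t : ℝ) : ℝ := 1 / (1 + Real.exp (-t))

/-- The bin functions ℓ_{k,K}. -/
noncomputable def ell (χ : ℕ → ℝ) (γ : ℝ) (T k : ℕ) (x : ℝ) : ℝ :=
  if k = 1 then 1 - sigmoid ((x - χ 1) / γ)
  else if k = T then sigmoid ((x - χ (T - 1)) / γ)
  else sigmoid ((x - χ (k - 1)) / γ) - sigmoid ((x - χ k) / γ)

/-! ### The sigmoid and the bin functions -/

lemma sigmoid_nonneg (t : ℝ) : 0 ≤ sigmoid t := by unfold sigmoid; positivity

lemma sigmoid_le_one (t : ℝ) : sigmoid t ≤ 1 := by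
  unfold sigmoid
  rw [div_le_one (by positivity)]
  linarith [Real.exp_pos (-t)]

lemma sigmoid_mono {s t : ℝ} (h : s ≤ t) : sigmoid s ≤ sigmoid t := by
  unfold sigmoid
  gcongr

lemma sigmoid_zero : sigmoid 0 = 1 / 2 := by norm_num [sigmoid]

lemma one_sub_sigmoid (t : ℝ) : 1 - sigmoid t = sigmoid (-t) := by
  unfold sigmoid
  rw [neg_neg, Real.exp_neg]
  have := Real.exp_pos t
  field_simp
  ring

lemma mul_sigmoid_neg_le (t : ℝ) : t * sigmoid (-t) ≤ 1 := by
  unfold sigmoid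
  rw [neg_neg, mul_one_div, div_le_one (by positivity)]
  linarith [Real.add_one_le_exp t]

lemma sigmoid_one_ge : 2 / 3 ≤ sigmoid 1 := by
  have h : Real.exp (-1) ≤ 1 / 2 := by
    rw [Real.exp_neg, ← one_div]
    exact one_div_le_one_div_of_le two_pos (by linarith [Real.add_one_le_exp (1 : ℝ)])
  unfold sigmoid
  rw [div_le_div_iff₀ (by norm_num) (by positivity)]
  linarith

lemma sigmoid_continuous : Continuous sigmoid := by
  unfold sigmoid
  exact continuous_const.div (by fun_prop) (fun t => by positivity)

/-- A distance `max 0 u` weighted by a sigmoid tail at scale `γ` is at most `γ`. -/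
lemma sigmoid_mul_max_le {γ : ℝ} (hγ : 0 < γ) (u : ℝ) :
    sigmoid (-(u / γ)) * max 0 u ≤ γ := by
  rcases le_total u 0 with h | h
  · simp [max_eq_left h, hγ.le]
  · rw [max_eq_right h]
    have := mul_sigmoid_neg_le (u / γ)
    calc sigmoid (-(u / γ)) * u = γ * (u / γ * sigmoid (-(u / γ))) := by field_simp
      _ ≤ γ * 1 := by gcongr
      _ = γ := mul_one γ

lemma continuous_ell (χ : ℕ → ℝ) (γ : ℝ) (K k : ℕ) : Continuous (ell χ γ K k) := by
  have h (c : ℝ) : Continuous fun x => sigmoid ((x - c) / γ) :=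
    sigmoid_continuous.comp ((continuous_id.sub continuous_const).div_const γ)
  unfold ell
  split_ifs
  · exact continuous_const.sub (h _)
  · exact h _
  · exact (h _).sub (h _)

lemma ell_nonneg {χ : ℕ → ℝ} {γ : ℝ} (hγ : 0 < γ) {K k : ℕ}
    (hχ : ∀ k < K, χ k < χ (k + 1)) (hk1 : 1 ≤ k) (hkK : k ≤ K) (x : ℝ) :
    0 ≤ ell χ γ K k x := by
  unfold ell
  split_ifs
  · linarith [sigmoid_le_one ((x - χ 1) / γ)]
  · exact sigmoid_nonneg _
  · have h := hχ (k - 1) (by omega)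
    rw [Nat.sub_add_cancel hk1] at h
    linarith [sigmoid_mono (s := (x - χ k) / γ) (t := (x - χ (k - 1)) / γ) (by gcongr)]

/-- The bin functions telescope to a partition of unity. -/
lemma sum_ell (χ : ℕ → ℝ) (γ : ℝ) {K : ℕ} (hK : 2 ≤ K) (x : ℝ) :
    ∑ k ∈ Finset.Icc 1 K, ell χ γ K k x = 1 := by
  have h : ∀ m : ℕ, m + 1 < K →
      ∑ k ∈ Finset.Icc 1 (m + 1), ell χ γ K k x = 1 - sigmoid ((x - χ (m + 1)) / γ) := by
    intro m
    induction m with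
    | zero => intro _; simp [ell]
    | succ m ih =>
      intro hm
      rw [Finset.sum_Icc_succ_top (by omega), ih (by omega)]
      have : ell χ γ K (m + 1 + 1) x
          = sigmoid ((x - χ (m + 1)) / γ) - sigmoid ((x - χ (m + 1 + 1)) / γ) := by
        rw [ell, if_neg (by omega), if_neg (by omega)]; rfl
      rw [this]; ring
  obtain ⟨m, rfl⟩ : ∃ m, K = m + 1 + 1 := ⟨K - 2, by omega⟩
  rw [Finset.sum_Icc_succ_top (by omega), h m (by omega)]
  have : ell χ γ (m + 1 + 1) (m + 1 + 1) x = sigmoid ((x - χ (m + 1)) / γ) := by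
    rw [ell, if_neg (by omega), if_pos rfl]; rfl
  rw [this]; ring

/-- The distance from `y` to the bin `[χ (k - 1), χ k]`: at most one of the two terms is nonzero
when `χ (k - 1) ≤ χ k`. -/
noncomputable def binDist (χ : ℕ → ℝ) (k : ℕ) (y : ℝ) : ℝ :=
  max 0 (χ (k - 1) - y) + max 0 (y - χ k)

lemma binDist_nonneg (χ : ℕ → ℝ) (k : ℕ) (y : ℝ) : 0 ≤ binDist χ k y := by
  unfold binDist; positivity

/-- The bin function `ℓ_k` decays at scale `γ` away from its bin. The extreme bin functions do not
decay outwards, but no `y` in `[χ 0, χ K]` lies on that side. -/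
lemma ell_mul_binDist_le {χ : ℕ → ℝ} {γ : ℝ} (hγ : 0 < γ) {K k : ℕ} (hK : 2 ≤ K)
    (hχ : ∀ k < K, χ k < χ (k + 1)) (hk1 : 1 ≤ k) (hkK : k ≤ K) {y : ℝ}
    (hy : y ∈ Set.Icc (χ 0) (χ K)) :
    ell χ γ K k y * binDist χ k y ≤ 2 * γ := by
  have hl : ell χ γ K k y * max 0 (χ (k - 1) - y) ≤ γ := by
    by_cases h1 : k = 1
    · subst h1
      rw [max_eq_left (by simpa using hy.1)]; simpa using hγ.le
    · refine le_trans ?_ (sigmoid_mul_max_le hγ (χ (k - 1) - y))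
      gcongr
      rw [ell, if_neg h1, show -((χ (k - 1) - y) / γ) = (y - χ (k - 1)) / γ by ring]
      split_ifs with h2
      · rw [h2]
      · linarith [sigmoid_nonneg ((y - χ k) / γ)]
  have hr : ell χ γ K k y * max 0 (y - χ k) ≤ γ := by
    by_cases h2 : k = K
    · subst h2
      rw [max_eq_left (by simpa using hy.2)]; simpa using hγ.le
    · refine le_trans ?_ (sigmoid_mul_max_le hγ (y - χ k))
      gcongr
      rw [ell, if_neg h2, ← one_sub_sigmoid]
      split_ifs with h1
      · rw [h1]
      · linarith [sigmoid_le_one ((y - χ (k - 1)) / γ)]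
  rw [binDist, mul_add]
  linarith

lemma ell_ge_of_mem {χ : ℕ → ℝ} {γ : ℝ} (hγ : 0 < γ) {K k : ℕ} {y : ℝ}
    (hy : y ∈ Set.Ico (χ (k - 1) + γ) (χ k)) : 1 / 6 ≤ ell χ γ K k y := by
  have hl : 2 / 3 ≤ sigmoid ((y - χ (k - 1)) / γ) := by
    refine sigmoid_one_ge.trans (sigmoid_mono ?_)
    rw [le_div_iff₀ hγ]; linarith [hy.1]
  have hr : sigmoid ((y - χ k) / γ) ≤ 1 / 2 := by
    rw [← sigmoid_zero]
    exact sigmoid_mono (div_nonpos_of_nonpos_of_nonneg (by linarith [hy.2]) hγ.le)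
  unfold ell
  split_ifs with h1 h2
  · subst h1; linarith
  · subst h2; linarith
  · linarith

/-! ### The one-variable estimate -/

/-- The measure on `[a, b]` with Lebesgue density `f`. -/
noncomputable abbrev densMeasure (a b : ℝ) (f : ℝ → ℝ) : Measure ℝ :=
  (volume.restrict (Set.Icc a b)).withDensity (fun x => ENNReal.ofReal (f x))

lemma densMeasure_le {a b pU : ℝ} {f : ℝ → ℝ} (hf : ∀ x ∈ Set.Icc a b, f x ≤ pU)
    {s : Set ℝ} (hs : MeasurableSet s) :
    densMeasure a b f s ≤ ENNReal.ofReal pU * volume s := by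
  rw [withDensity_apply _ hs, Measure.restrict_restrict hs]
  calc ∫⁻ x in s ∩ Set.Icc a b, ENNReal.ofReal (f x)
      ≤ ∫⁻ _ in s ∩ Set.Icc a b, ENNReal.ofReal pU :=
        setLIntegral_mono measurable_const fun x hx => ENNReal.ofReal_le_ofReal (hf x hx.2)
    _ = ENNReal.ofReal pU * volume (s ∩ Set.Icc a b) := by simp
    _ ≤ _ := by gcongr; exact Set.inter_subset_left

lemma le_densMeasure {a b pL : ℝ} {f : ℝ → ℝ} (hfm : Measurable f)
    (hf : ∀ x ∈ Set.Icc a b, pL ≤ f x) {s : Set ℝ} (hs : MeasurableSet s) (hsub : s ⊆ Set.Icc a b) :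
    ENNReal.ofReal pL * volume s ≤ densMeasure a b f s := by
  rw [withDensity_apply _ hs, Measure.restrict_restrict hs, Set.inter_eq_left.2 hsub]
  calc ENNReal.ofReal pL * volume s = ∫⁻ _ in s, ENNReal.ofReal pL := by simp
    _ ≤ _ := setLIntegral_mono (by fun_prop) fun x hx => ENNReal.ofReal_le_ofReal (hf x (hsub hx))

lemma ae_mem_densMeasure (a b : ℝ) (f : ℝ → ℝ) : ∀ᵐ x ∂densMeasure a b f, x ∈ Set.Icc a b :=
  (withDensity_absolutelyContinuous _ _).ae_le (ae_restrict_mem measurableSet_Icc)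

lemma integrable_of_continuous {a b : ℝ} {f : ℝ → ℝ} [IsProbabilityMeasure (densMeasure a b f)]
    {h : ℝ → ℝ} (hh : Continuous h) : Integrable h (densMeasure a b f) := by
  rw [← Measure.restrict_eq_self_of_ae_mem (ae_mem_densMeasure a b f)]
  exact hh.continuousOn.integrableOn_compact isCompact_Icc

/-- The triangle inequality through the `k`-th bin: a bin of mass `1 / K`, intersected with
`[a, b]`, has length at most `1 / (pL K)`. -/
lemma abs_sub_le_binDist {a b pL : ℝ} {f : ℝ → ℝ} (hpL : 0 < pL) (hfm : Measurable f)
    (hf : ∀ x ∈ Set.Icc a b, pL ≤ f x) {χ : ℕ → ℝ} {K k : ℕ} (hK : 2 ≤ K)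
    (hmass : densMeasure a b f (Set.Ico (χ (k - 1)) (χ k)) = (K : ENNReal)⁻¹)
    {x y : ℝ} (hx : x ∈ Set.Icc a b) (hy : y ∈ Set.Icc a b) :
    |x - y| ≤ binDist χ k x + 1 / (pL * K) + binDist χ k y := by
  have hK0 : (0 : ℝ) < K := by positivity
  have hW : 0 ≤ 1 / (pL * K) := by positivity
  -- Only `χ 0 ≤ a` and `b ≤ χ K` are known, so the extreme bins are cut down to `[a, b]`.
  have hlen : min b (χ k) - max a (χ (k - 1)) ≤ 1 / (pL * K) := by
    rcases le_total (min b (χ k)) (max a (χ (k - 1))) with h | h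
    · linarith
    have h1 := le_densMeasure hfm hf (s := Set.Ico (max a (χ (k - 1))) (min b (χ k)))
      measurableSet_Ico fun z hz => ⟨(le_max_left _ _).trans hz.1, hz.2.le.trans (min_le_left _ _)⟩
    have h2 := h1.trans ((measure_mono (Set.Ico_subset_Ico (le_max_right _ _)
      (min_le_right _ _))).trans hmass.le)
    rw [Real.volume_Ico, ← ENNReal.ofReal_mul hpL.le, ← ENNReal.ofReal_natCast,
      ← ENNReal.ofReal_inv_of_pos hK0, ENNReal.ofReal_le_ofReal_iff (by positivity)] at h2
    rw [le_div_iff₀ (by positivity)]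
    calc (min b (χ k) - max a (χ (k - 1))) * (pL * K)
        = pL * (min b (χ k) - max a (χ (k - 1))) * K := by ring
      _ ≤ (K : ℝ)⁻¹ * K := by gcongr
      _ = 1 := by field_simp
  have hup : ∀ z ∈ Set.Icc a b, z ≤ min b (χ k) + binDist χ k z := by
    intro z hz
    rw [← sub_le_iff_le_add, le_min_iff]
    refine ⟨by linarith [hz.2, binDist_nonneg χ k z], ?_⟩
    unfold binDist
    linarith [le_max_left 0 (χ (k - 1) - z), le_max_right 0 (z - χ k)]
  have hdn : ∀ z ∈ Set.Icc a b, max a (χ (k - 1)) - binDist χ k z ≤ z := by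
    intro z hz
    rw [sub_le_iff_le_add, max_le_iff]
    refine ⟨by linarith [hz.1, binDist_nonneg χ k z], ?_⟩
    unfold binDist
    linarith [le_max_right 0 (χ (k - 1) - z), le_max_left 0 (z - χ k)]
  rw [abs_sub_le_iff]
  constructor
  · linarith [hup x hx, hdn y hy]
  · linarith [hup y hy, hdn x hx]

/-- Removing an initial piece of length `γ` from a bin costs mass at most `pU γ ≤ 1 / (2 K)`, and
`ℓ_k ≥ 1 / 6` on what is left. -/
lemma integral_ell_ge {a b pU : ℝ} {f : ℝ → ℝ} [IsProbabilityMeasure (densMeasure a b f)]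
    (hpU : 0 < pU) (hf : ∀ x ∈ Set.Icc a b, f x ≤ pU) {χ : ℕ → ℝ} {K k : ℕ} (hK : 2 ≤ K)
    (hKU : 2 * pU ≤ K) (hχ : ∀ k < K, χ k < χ (k + 1)) (hk1 : 1 ≤ k) (hkK : k ≤ K)
    (hmass : densMeasure a b f (Set.Ico (χ (k - 1)) (χ k)) = (K : ENNReal)⁻¹) :
    1 / (12 * (K : ℝ)) ≤ ∫ y, ell χ (1 / (K : ℝ) ^ 3) K k y ∂densMeasure a b f := by
  have hK0 : (2 : ℝ) ≤ K := by exact_mod_cast hK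
  set γ : ℝ := 1 / (K : ℝ) ^ 3 with hγdef
  have hγ : 0 < γ := by positivity
  set ν := densMeasure a b f with hν
  have hbin : ν.real (Set.Ico (χ (k - 1)) (χ k)) = (K : ℝ)⁻¹ := by
    rw [measureReal_def, hmass]; simp
  have hsmall : ν.real (Set.Ico (χ (k - 1)) (χ (k - 1) + γ)) ≤ pU * γ := by
    have h := densMeasure_le (b := b) hf (measurableSet_Ico (a := χ (k - 1)) (b := χ (k - 1) + γ))
    rw [Real.volume_Ico, add_sub_cancel_left, ← ENNReal.ofReal_mul hpU.le] at h
    exact ENNReal.toReal_le_of_le_ofReal (by positivity) h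
  have hsplit : (K : ℝ)⁻¹ ≤ pU * γ + ν.real (Set.Ico (χ (k - 1) + γ) (χ k)) := by
    rw [← hbin]
    refine (measureReal_mono ?_).trans ((measureReal_union_le _ _).trans
      (add_le_add_left hsmall _))
    exact Set.Ico_subset_Ico_union_Ico
  have hγU : pU * γ ≤ (K : ℝ)⁻¹ / 2 := by
    rw [hγdef, mul_one_div, div_le_iff₀ (by positivity)]
    have : (K : ℝ)⁻¹ / 2 * (K : ℝ) ^ 3 = K * K / 2 := by field_simp
    rw [this]; nlinarith
  have hmarkov := mul_meas_ge_le_integral_of_nonneg (μ := ν) (f := ell χ γ K k)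
    (Filter.Eventually.of_forall fun y => ell_nonneg hγ hχ hk1 hkK y)
    (integrable_of_continuous (continuous_ell χ γ K k)) (1 / 6)
  have hsub : ν.real (Set.Ico (χ (k - 1) + γ) (χ k)) ≤ ν.real {y | 1 / 6 ≤ ell χ γ K k y} :=
    measureReal_mono fun y hy => ell_ge_of_mem hγ hy
  have : 1 / (12 * (K : ℝ)) = 1 / 6 * ((K : ℝ)⁻¹ / 2) := by field_simp; norm_num
  rw [this]
  linarith

/-- The one-variable estimate: averaging `|x - y|` against each `ℓ_k` and recombining with the
weights `ℓ_k(x)` gives at most `(26 + 1 / pL) / K`. -/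
lemma sum_ell_mul_average_le {a b pL pU : ℝ} {f : ℝ → ℝ} [IsProbabilityMeasure (densMeasure a b f)]
    (hpL : 0 < pL) (hpU : 0 < pU) (hfm : Measurable f)
    (hf : ∀ x ∈ Set.Icc a b, pL ≤ f x ∧ f x ≤ pU) {χ : ℕ → ℝ} {K : ℕ} (hK : 2 ≤ K)
    (hKU : 2 * pU ≤ K) (hχ : ∀ k < K, χ k < χ (k + 1))
    (hsub : Set.Icc a b ⊆ Set.Icc (χ 0) (χ K))
    (hmass : ∀ k, 1 ≤ k → k ≤ K →
      densMeasure a b f (Set.Ico (χ (k - 1)) (χ k)) = (K : ENNReal)⁻¹)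
    {x : ℝ} (hx : x ∈ Set.Icc a b) :
    ∑ k ∈ Finset.Icc 1 K, ell χ (1 / (K : ℝ) ^ 3) K k x *
      ((∫ y, ell χ (1 / (K : ℝ) ^ 3) K k y * |x - y| ∂densMeasure a b f)
        / ∫ y, ell χ (1 / (K : ℝ) ^ 3) K k y ∂densMeasure a b f) ≤ (26 + 1 / pL) / K := by
  have hK0 : (2 : ℝ) ≤ K := by exact_mod_cast hK
  set γ : ℝ := 1 / (K : ℝ) ^ 3 with hγdef
  have hγ : 0 < γ := by positivity
  set ν := densMeasure a b f with hν
  have hterm : ∀ k ∈ Finset.Icc 1 K, ell χ γ K k x *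
      ((∫ y, ell χ γ K k y * |x - y| ∂ν) / ∫ y, ell χ γ K k y ∂ν)
      ≤ 2 * γ + ell χ γ K k x * (1 / (pL * K) + 24 * K * γ) := by
    intro k hk
    obtain ⟨hk1, hkK⟩ := Finset.mem_Icc.1 hk
    have hm := hmass k hk1 hkK
    have hZ := integral_ell_ge hpU (fun z hz => (hf z hz).2) hK hKU hχ hk1 hkK hm
    rw [← hγdef, ← hν] at hZ
    have hZ0 : 0 < ∫ y, ell χ γ K k y ∂ν := lt_of_lt_of_le (by positivity) hZ
    have hint : ∫ y, ell χ γ K k y * |x - y| ∂ν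
        ≤ ∫ y, ell χ γ K k y * (binDist χ k x + 1 / (pL * K)) + 2 * γ ∂ν := by
      refine integral_mono_ae
        (integrable_of_continuous ((continuous_ell χ γ K k).mul (by fun_prop)))
        (integrable_of_continuous
          (((continuous_ell χ γ K k).mul continuous_const).add continuous_const)) ?_
      filter_upwards [ae_mem_densMeasure a b f] with y hy
      calc ell χ γ K k y * |x - y|
          ≤ ell χ γ K k y * (binDist χ k x + 1 / (pL * K) + binDist χ k y) :=
            mul_le_mul_of_nonneg_left
              (abs_sub_le_binDist hpL hfm (fun z hz => (hf z hz).1) hK hm hx hy)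
              (ell_nonneg hγ hχ hk1 hkK y)
        _ ≤ _ := by
            linarith [ell_mul_binDist_le hγ hK hχ hk1 hkK (hsub hy)]
    rw [integral_add (f := fun y => ell χ γ K k y * (binDist χ k x + 1 / (pL * K)))
      (integrable_of_continuous ((continuous_ell χ γ K k).mul continuous_const))
      (integrable_const _), integral_mul_const] at hint
    simp only [integral_const, probReal_univ, smul_eq_mul, one_mul] at hint
    have havg : (∫ y, ell χ γ K k y * |x - y| ∂ν) / ∫ y, ell χ γ K k y ∂ν
        ≤ binDist χ k x + 1 / (pL * K) + 24 * K * γ := by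
      rw [div_le_iff₀ hZ0]
      have : 2 * γ ≤ 24 * K * γ * ∫ y, ell χ γ K k y ∂ν :=
        calc 2 * γ = 24 * K * γ * (1 / (12 * K)) := by field_simp; norm_num
          _ ≤ _ := by gcongr
      linarith
    calc _ ≤ ell χ γ K k x * (binDist χ k x + 1 / (pL * K) + 24 * K * γ) :=
          mul_le_mul_of_nonneg_left havg (ell_nonneg hγ hχ hk1 hkK x)
      _ ≤ _ := by linarith [ell_mul_binDist_le hγ hK hχ hk1 hkK (hsub hx)]
  refine (Finset.sum_le_sum hterm).trans ?_
  rw [Finset.sum_add_distrib, ← Finset.sum_mul _ (fun k => ell χ γ K k x),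
    sum_ell χ γ hK x]
  simp only [Finset.sum_const, Nat.card_Icc, nsmul_eq_mul, add_tsub_cancel_right, one_mul]
  have h : (K : ℝ) * γ ≤ 1 / K := by
    have : (K : ℝ) * γ = 1 / K * (1 / K) := by rw [hγdef]; field_simp
    rw [this]
    have h1 : 1 / (K : ℝ) ≤ 1 := by rw [div_le_one (by positivity)]; linarith
    have h2 : 0 ≤ 1 / (K : ℝ) := by positivity
    nlinarith
  have : (26 + 1 / pL) / (K : ℝ) = 26 * (1 / K) + 1 / (pL * K) := by field_simp
  rw [this]
  linarith

/-! ### Product measures and product weights -/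

/-- Multiplying one factor of a product over `S`. -/
lemma prod_mul_ite {ι : Type*} [DecidableEq ι] {S : Finset ι} {i : ι} (hi : i ∈ S)
    (u : ι → ℝ) (v : ℝ) :
    ∏ j ∈ S, u j * (if j = i then v else 1) = (∏ j ∈ S, u j) * v := by
  rw [Finset.prod_mul_distrib, Finset.prod_ite_eq' S i, if_pos hi]

lemma ae_mem_box {ι : Type*} [Fintype ι] (μ : ι → Measure ℝ)
    [∀ j, IsProbabilityMeasure (μ j)] {a b : ι → ℝ}
    (h : ∀ j, ∀ᵐ t ∂μ j, t ∈ Set.Icc (a j) (b j)) :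
    ∀ᵐ y ∂Measure.pi μ, y ∈ Set.univ.pi fun j => Set.Icc (a j) (b j) := by
  have : ∀ᵐ y ∂Measure.pi μ, ∀ j, y j ∈ Set.Icc (a j) (b j) :=
    Filter.eventually_all.2 fun j => Measure.tendsto_eval_ae_ae.eventually (h j)
  filter_upwards [this] with y hy using fun j _ => hy j

lemma integrable_of_continuousOn_box {ι : Type*} [Fintype ι] (μ : ι → Measure ℝ)
    [∀ j, IsProbabilityMeasure (μ j)] {a b : ι → ℝ}
    (h : ∀ j, ∀ᵐ t ∂μ j, t ∈ Set.Icc (a j) (b j))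
    {F : (ι → ℝ) → ℝ} (hF : ContinuousOn F (Set.univ.pi fun j => Set.Icc (a j) (b j))) :
    Integrable F (Measure.pi μ) := by
  rw [← Measure.restrict_eq_self_of_ae_mem (ae_mem_box μ h)]
  exact hF.integrableOn_compact (isCompact_univ_pi fun j => isCompact_Icc)

section ProductMeasure

variable {ι : Type*} [Fintype ι] [DecidableEq ι] (μ : ι → Measure ℝ)
  [∀ j, IsProbabilityMeasure (μ j)] (S : Finset ι)

lemma integral_prod_subset (u : ι → ℝ → ℝ) :
    ∫ y, ∏ j ∈ S, u j (y j) ∂Measure.pi μ = ∏ j ∈ S, ∫ t, u j t ∂μ j := by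
  have h := integral_fintype_prod_eq_prod (𝕜 := ℝ) (μ := μ)
    (fun j t => if j ∈ S then u j t else 1)
  simp only [Finset.prod_ite_mem, Finset.univ_inter] at h
  rw [h, ← Finset.univ_inter S, ← Finset.prod_ite_mem, Finset.univ_inter]
  refine Finset.prod_congr rfl fun j _ => ?_
  split_ifs <;> simp

/-- Integrating a product against a function of the single coordinate `i ∈ S`, in terms of the
one-variable average `(∫ u i * v) / ∫ u i`. -/
lemma integral_prod_mul_coord (u : ι → ℝ → ℝ) (hu : ∀ j ∈ S, ∫ t, u j t ∂μ j ≠ 0) {i : ι}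
    (hi : i ∈ S) (v : ℝ → ℝ) :
    ∫ y, (∏ j ∈ S, u j (y j)) * v (y i) ∂Measure.pi μ
      = (∏ j ∈ S, ∫ t, u j t ∂μ j) * ((∫ t, u i t * v t ∂μ i) / ∫ t, u i t ∂μ i) := by
  have h := integral_prod_subset μ S (fun j t => u j t * (if j = i then v t else 1))
  have hl : ∀ y : ι → ℝ, ∏ j ∈ S, u j (y j) * (if j = i then v (y j) else 1)
      = (∏ j ∈ S, u j (y j)) * v (y i) := by
    intro y
    rw [← prod_mul_ite hi]
    refine Finset.prod_congr rfl fun j _ => ?_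
    split_ifs with hj
    · rw [hj]
    · rfl
  simp only [hl] at h
  rw [h, ← prod_mul_ite hi]
  refine Finset.prod_congr rfl fun j hj => ?_
  split_ifs with hji
  · subst hji; rw [mul_div_cancel₀ _ (hu j hj)]
  · simp

/-- Summing a product over all multi-indices. The coordinates outside `S` carry no
information, and their index is frozen at `1`. -/
lemma sum_prod_subset (T : Finset ℕ) (u : ι → ℕ → ℝ) :
    ∑ κ ∈ Fintype.piFinset (fun j : ι => if j ∈ S then T else ({1} : Finset ℕ)),
      ∏ j ∈ S, u j (κ j) = ∏ j ∈ S, ∑ k ∈ T, u j k := by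
  have h := Finset.prod_univ_sum (fun j : ι => if j ∈ S then T else ({1} : Finset ℕ))
    (fun j k => if j ∈ S then u j k else 1)
  simp only [Finset.prod_ite_mem, Finset.univ_inter] at h
  rw [← h, ← Finset.univ_inter S, ← Finset.prod_ite_mem, Finset.univ_inter]
  refine Finset.prod_congr rfl fun j _ => ?_
  split_ifs <;> simp

/-- A weighted sum over multi-indices of a function of the single index `κ i`, for weights which
are partitions of unity in each coordinate. -/
lemma sum_prod_mul_coord (T : Finset ℕ) (u : ι → ℕ → ℝ) (hu : ∀ j ∈ S, ∑ k ∈ T, u j k = 1)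
    {i : ι} (hi : i ∈ S) (v : ℕ → ℝ) :
    ∑ κ ∈ Fintype.piFinset (fun j : ι => if j ∈ S then T else ({1} : Finset ℕ)),
      (∏ j ∈ S, u j (κ j)) * v (κ i) = ∑ k ∈ T, u i k * v k := by
  have h := sum_prod_subset S T (fun j k => u j k * (if j = i then v k else 1))
  have hl : ∀ κ : ι → ℕ, ∏ j ∈ S, u j (κ j) * (if j = i then v (κ j) else 1)
      = (∏ j ∈ S, u j (κ j)) * v (κ i) := by
    intro κ
    rw [← prod_mul_ite hi]
    refine Finset.prod_congr rfl fun j _ => ?_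
    split_ifs with hj
    · rw [hj]
    · rfl
  simp only [hl] at h
  rw [h, Finset.prod_eq_single_of_mem i hi]
  · simp
  · intro j hj hji
    simp [hji, hu j hj]

end ProductMeasure

/-- The Euclidean norm is at most the `ℓ¹` norm. -/
lemma sqrt_sum_sq_le {ι : Type*} (S : Finset ι) (f : ι → ℝ) :
    Real.sqrt (∑ j ∈ S, f j ^ 2) ≤ ∑ j ∈ S, |f j| := by
  rw [Real.sqrt_le_left (Finset.sum_nonneg fun _ _ => abs_nonneg _)]
  simp_rw [← sq_abs (f _)]
  exact Finset.sum_sq_le_sq_sum_of_nonneg fun _ _ => abs_nonneg _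

/-! ### Reduction to one variable -/

/-- The reduction to one variable. If `w j` is, for each `j ∈ S`, a partition of unity whose
weighted averages of `|x j - t|` recombine to at most `ε`, then the approximant of `g` formed with
the product weights has error at most `L |S| ε` at `x`. -/
lemma abs_sub_approximant_le {ι : Type*} [Fintype ι] [DecidableEq ι] (μ : ι → Measure ℝ)
    [∀ j, IsProbabilityMeasure (μ j)] (S : Finset ι) {a b : ι → ℝ}
    (hsupp : ∀ j, ∀ᵐ t ∂μ j, t ∈ Set.Icc (a j) (b j)) (T : Finset ℕ) (w : ι → ℕ → ℝ → ℝ)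
    (hwc : ∀ j k, Continuous (w j k)) (hw0 : ∀ j ∈ S, ∀ k ∈ T, ∀ t, 0 ≤ w j k t)
    (hZ : ∀ j ∈ S, ∀ k ∈ T, 0 < ∫ t, w j k t ∂μ j)
    (x : ι → ℝ) (hx : ∀ j, x j ∈ Set.Icc (a j) (b j))
    (hw1 : ∀ j ∈ S, ∑ k ∈ T, w j k (x j) = 1) {ε : ℝ}
    (hε : ∀ j ∈ S, ∑ k ∈ T, w j k (x j)
      * ((∫ t, w j k t * |x j - t| ∂μ j) / ∫ t, w j k t ∂μ j) ≤ ε)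
    {L : ℝ} (hL : 0 ≤ L) (g : (ι → ℝ) → ℝ)
    (hg : ∀ x y : ι → ℝ, (∀ j, x j ∈ Set.Icc (a j) (b j)) → (∀ j, y j ∈ Set.Icc (a j) (b j)) →
      |g x - g y| ≤ L * ∑ j ∈ S, |x j - y j|) :
    |g x - ∑ κ ∈ Fintype.piFinset (fun j : ι => if j ∈ S then T else ({1} : Finset ℕ)),
        ((∫ y, (∏ j ∈ S, w j (κ j) (y j)) * g y ∂(Measure.pi μ))
          / ∫ y, (∏ j ∈ S, w j (κ j) (y j)) ∂(Measure.pi μ))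
          * ∏ j ∈ S, w j (κ j) (x j)| ≤ L * (S.card * ε) := by
  set I := Fintype.piFinset (fun j : ι => if j ∈ S then T else ({1} : Finset ℕ)) with hI
  have hmem : ∀ κ ∈ I, ∀ j ∈ S, κ j ∈ T := by
    intro κ hκ j hj
    have := Fintype.mem_piFinset.1 hκ j
    rwa [if_pos hj] at this
  have hone : ∑ κ ∈ I, ∏ j ∈ S, w j (κ j) (x j) = 1 := by
    rw [hI, sum_prod_subset S T (fun j k => w j k (x j)), Finset.prod_eq_one hw1]
  have hgc : ContinuousOn g (Set.univ.pi fun j => Set.Icc (a j) (b j)) := by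
    intro z hz
    refine tendsto_iff_dist_tendsto_zero.2 ?_
    have hlim : Filter.Tendsto (fun y : ι → ℝ => L * ∑ j ∈ S, |y j - z j|)
        (nhdsWithin z (Set.univ.pi fun j => Set.Icc (a j) (b j))) (nhds 0) := by
      have hc : Continuous fun y : ι → ℝ => L * ∑ j ∈ S, |y j - z j| := by fun_prop
      simpa using (hc.tendsto z).mono_left nhdsWithin_le_nhds
    refine squeeze_zero' (Filter.Eventually.of_forall fun _ => dist_nonneg) ?_ hlim
    filter_upwards [self_mem_nhdsWithin] with y hy
    exact hg y z (fun j => hy j trivial) (fun j => hz j trivial)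
  have hφc : ∀ κ : ι → ℕ, Continuous fun y : ι → ℝ => ∏ j ∈ S, w j (κ j) (y j) := fun κ =>
    continuous_finsetProd _ fun j _ => (hwc j (κ j)).comp (continuous_apply j)
  have hδ : ∀ κ ∈ I, |g x - (∫ y, (∏ j ∈ S, w j (κ j) (y j)) * g y ∂(Measure.pi μ))
      / ∫ y, (∏ j ∈ S, w j (κ j) (y j)) ∂(Measure.pi μ)| ≤ L * ∑ i ∈ S,
        (∫ t, w i (κ i) t * |x i - t| ∂μ i) / ∫ t, w i (κ i) t ∂μ i := by
    intro κ hκ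
    have hne : ∀ j ∈ S, ∫ t, w j (κ j) t ∂μ j ≠ 0 := fun j hj => (hZ j hj _ (hmem κ hκ j hj)).ne'
    have hZκ : 0 < ∫ y, (∏ j ∈ S, w j (κ j) (y j)) ∂(Measure.pi μ) := by
      rw [integral_prod_subset μ S (fun j => w j (κ j))]
      exact Finset.prod_pos fun j hj => hZ j hj _ (hmem κ hκ j hj)
    have hnum : g x * ∫ y, (∏ j ∈ S, w j (κ j) (y j)) ∂(Measure.pi μ)
        - ∫ y, (∏ j ∈ S, w j (κ j) (y j)) * g y ∂(Measure.pi μ)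
        = ∫ y, (∏ j ∈ S, w j (κ j) (y j)) * (g x - g y) ∂(Measure.pi μ) := by
      rw [← integral_const_mul, ← integral_sub]
      · congr 1; ext y; ring
      · exact integrable_of_continuousOn_box μ hsupp (by fun_prop)
      · exact integrable_of_continuousOn_box μ hsupp ((hφc κ).continuousOn.mul hgc)
    have hbound : |∫ y, (∏ j ∈ S, w j (κ j) (y j)) * (g x - g y) ∂(Measure.pi μ)|
        ≤ ∫ y, L * ∑ i ∈ S, (∏ j ∈ S, w j (κ j) (y j)) * |x i - y i| ∂(Measure.pi μ) := by
      rw [← Real.norm_eq_abs]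
      refine norm_integral_le_of_norm_le
        (integrable_of_continuousOn_box μ hsupp (Continuous.continuousOn ?_)) ?_
      · exact continuous_const.mul (continuous_finsetSum _ fun i _ => (hφc κ).mul (by fun_prop))
      · filter_upwards [ae_mem_box μ hsupp] with y hy
        have h0 : 0 ≤ ∏ j ∈ S, w j (κ j) (y j) :=
          Finset.prod_nonneg fun j hj => hw0 j hj _ (hmem κ hκ j hj) _
        rw [norm_mul, Real.norm_of_nonneg h0, ← Finset.mul_sum, mul_left_comm]
        exact mul_le_mul_of_nonneg_left (hg x y hx fun j => hy j trivial) h0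
    have hint : ∀ i ∈ S, Integrable (fun y => (∏ j ∈ S, w j (κ j) (y j)) * |x i - y i|)
        (Measure.pi μ) := fun i _ =>
      integrable_of_continuousOn_box μ hsupp ((hφc κ).mul (by fun_prop)).continuousOn
    rw [integral_const_mul, integral_finsetSum _ hint] at hbound
    have hsum : ∑ i ∈ S, ∫ y, (∏ j ∈ S, w j (κ j) (y j)) * |x i - y i| ∂(Measure.pi μ)
        = (∫ y, (∏ j ∈ S, w j (κ j) (y j)) ∂(Measure.pi μ))
          * ∑ i ∈ S, (∫ t, w i (κ i) t * |x i - t| ∂μ i) / ∫ t, w i (κ i) t ∂μ i := by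
      rw [Finset.mul_sum]
      refine Finset.sum_congr rfl fun i hi => ?_
      rw [integral_prod_mul_coord μ S (fun j => w j (κ j)) hne hi (fun t => |x i - t|),
        integral_prod_subset μ S (fun j => w j (κ j))]
    rw [hsum] at hbound
    rw [← mul_div_cancel_right₀ (g x) hZκ.ne', ← sub_div, hnum, abs_div, abs_of_pos hZκ,
      div_le_iff₀ hZκ]
    linarith
  have hcomb : g x - ∑ κ ∈ I,
        ((∫ y, (∏ j ∈ S, w j (κ j) (y j)) * g y ∂(Measure.pi μ))
          / ∫ y, (∏ j ∈ S, w j (κ j) (y j)) ∂(Measure.pi μ)) * ∏ j ∈ S, w j (κ j) (x j)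
      = ∑ κ ∈ I, (g x - (∫ y, (∏ j ∈ S, w j (κ j) (y j)) * g y ∂(Measure.pi μ))
          / ∫ y, (∏ j ∈ S, w j (κ j) (y j)) ∂(Measure.pi μ)) * ∏ j ∈ S, w j (κ j) (x j) := by
    simp only [sub_mul, Finset.sum_sub_distrib]
    rw [← Finset.mul_sum, hone, mul_one]
  rw [hcomb]
  refine (Finset.abs_sum_le_sum_abs _ _).trans ?_
  calc _ ≤ ∑ κ ∈ I, L * ∑ i ∈ S, (∏ j ∈ S, w j (κ j) (x j)) *
          ((∫ t, w i (κ i) t * |x i - t| ∂μ i) / ∫ t, w i (κ i) t ∂μ i) := by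
        refine Finset.sum_le_sum fun κ hκ => ?_
        have h0 : 0 ≤ ∏ j ∈ S, w j (κ j) (x j) :=
          Finset.prod_nonneg fun j hj => hw0 j hj _ (hmem κ hκ j hj) _
        rw [abs_mul, abs_of_nonneg h0, ← Finset.mul_sum, mul_left_comm,
          mul_comm _ (∏ j ∈ S, w j (κ j) (x j))]
        exact mul_le_mul_of_nonneg_left (hδ κ hκ) h0
    _ = L * ∑ i ∈ S, ∑ k ∈ T, w i k (x i)
          * ((∫ t, w i k t * |x i - t| ∂μ i) / ∫ t, w i k t ∂μ i) := by
        rw [← Finset.mul_sum, Finset.sum_comm]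
        congr 1
        refine Finset.sum_congr rfl fun i hi => ?_
        rw [hI, sum_prod_mul_coord S T (fun j k => w j k (x j)) hw1 hi
          (fun k => (∫ t, w i k t * |x i - t| ∂μ i) / ∫ t, w i k t ∂μ i)]
    _ ≤ L * (S.card * ε) := by
        gcongr
        rw [← nsmul_eq_mul]
        exact Finset.sum_le_card_nsmul _ _ _ hε

/-- **Multivariate bin approximation (case |S| = d of Theorem 3.3).**
There are C_S > 0 and K₀, depending only on d, L, p_L, p_U and the lengths of the
intervals X_j, such that for all K ≥ K₀ the multivariate bin approximant f_{E,S} of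
any L-Lipschitz g_{0,S} satisfies sup |g_{0,S} − f_{E,S}| ≤ C_S·d/K. -/
theorem multivariate_bin_approximant_uniform_error
    (p d : ℕ) (hp : 1 ≤ p)
    (S : Finset (Fin p)) (hS : S.Nonempty) (hcard : S.card = d)
    (len : Fin p → ℝ) (hlen : ∀ j ∈ S, 0 < len j)
    (L pL pU : ℝ) (hL : 0 ≤ L) (hpL : 0 < pL) (hpLU : pL ≤ pU) :
    ∃ C : ℝ, 0 < C ∧ ∃ K₀ : ℕ,
      ∀ (a b : Fin p → ℝ), (∀ j ∈ S, a j < b j) → (∀ j ∈ S, b j - a j = len j) →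
      ∀ (dens : Fin p → ℝ → ℝ), (∀ j, Measurable (dens j)) →
      (∀ j ∈ S, ∀ x ∈ Set.Icc (a j) (b j), pL ≤ dens j x ∧ dens j x ≤ pU) →
      ∀ (μ : Fin p → Measure ℝ),
        (∀ j, μ j = (volume.restrict (Set.Icc (a j) (b j))).withDensity
          (fun x => ENNReal.ofReal (dens j x))) →
        (∀ j, IsProbabilityMeasure (μ j)) →
      ∀ (K : ℕ), 2 ≤ K → K₀ ≤ K →
      ∀ (χ : Fin p → ℕ → ℝ), (∀ j ∈ S, ∀ k < K, χ j k < χ j (k + 1)) →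
        (∀ j ∈ S, Set.Icc (a j) (b j) ⊆ Set.Icc (χ j 0) (χ j K)) →
        (∀ j ∈ S, ∀ k, 1 ≤ k → k ≤ K →
          μ j (Set.Ico (χ j (k - 1)) (χ j k)) = (K : ENNReal)⁻¹) →
      ∀ (γ : ℝ), γ = 1 / (K : ℝ) ^ 3 →
      ∀ (g : (Fin p → ℝ) → ℝ),
        (∀ x y : Fin p → ℝ, (∀ j ∈ S, x j = y j) → g x = g y) →
        (∀ x y : Fin p → ℝ, (∀ j, x j ∈ Set.Icc (a j) (b j)) →
          (∀ j, y j ∈ Set.Icc (a j) (b j)) →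
          |g x - g y| ≤ L * Real.sqrt (∑ j ∈ S, (x j - y j) ^ 2)) →
      ∀ x : Fin p → ℝ, (∀ j, x j ∈ Set.Icc (a j) (b j)) →
        |g x - ∑ κ ∈ Fintype.piFinset
            (fun j : Fin p => if j ∈ S then Finset.Icc 1 K else ({1} : Finset ℕ)),
            ((∫ y, (∏ j ∈ S, ell (χ j) γ K (κ j) (y j)) * g y ∂(Measure.pi μ))
              / ∫ y, (∏ j ∈ S, ell (χ j) γ K (κ j) (y j)) ∂(Measure.pi μ))
              * ∏ j ∈ S, ell (χ j) γ K (κ j) (x j)|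
          ≤ C * (d : ℝ) / (K : ℝ) := by
  have hpU : 0 < pU := hpL.trans_le hpLU
  -- The summand `1` keeps the constant positive when `L = 0`; the threshold ensures `2 pU ≤ K`, so
  -- that `pU γ ≤ 1 / (2 K)`.
  refine ⟨L * (26 + 1 / pL) + 1, by positivity, ⌈2 * pU⌉₊, ?_⟩
  intro a b hab hlen' dens hdm hd μ hμ hprob K hK hKK χ hχ hsub hmass γ hγ g hgS hg x hx
  obtain rfl : μ = fun j => densMeasure (a j) (b j) (dens j) := funext hμ
  subst hγ
  have hKU : 2 * pU ≤ K := (Nat.le_ceil _).trans (by exact_mod_cast hKK)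
  have hγ0 : (0 : ℝ) < 1 / (K : ℝ) ^ 3 := by positivity
  refine (abs_sub_approximant_le _ S (fun j => ae_mem_densMeasure (a j) (b j) (dens j))
    (Finset.Icc 1 K) (fun j k => ell (χ j) (1 / (K : ℝ) ^ 3) K k)
    (fun j k => continuous_ell _ _ _ _) ?_ ?_ x hx (fun j _ => sum_ell _ _ hK _)
    (ε := (26 + 1 / pL) / K) ?_ hL g ?_).trans ?_
  · intro j hj k hk t
    exact ell_nonneg hγ0 (hχ j hj) (Finset.mem_Icc.1 hk).1 (Finset.mem_Icc.1 hk).2 t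
  · intro j hj k hk
    obtain ⟨hk1, hkK⟩ := Finset.mem_Icc.1 hk
    have := hprob j
    exact lt_of_lt_of_le (by positivity) (integral_ell_ge hpU (fun z hz => (hd j hj z hz).2) hK hKU
      (hχ j hj) hk1 hkK (hmass j hj k hk1 hkK))
  · intro j hj
    have := hprob j
    exact sum_ell_mul_average_le hpL hpU (hdm j) (hd j hj) hK hKU (hχ j hj) (hsub j hj)
      (hmass j hj) (hx j)
  · intro y z hy hz
    exact (hg y z hy hz).trans (mul_le_mul_of_nonneg_left (sqrt_sum_sq_le S _) hL)
  · rw [hcard]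
    calc L * (d * ((26 + 1 / pL) / K)) = L * (26 + 1 / pL) * (d : ℝ) / (K : ℝ) := by ring
      _ ≤ _ := by gcongr; linarith
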